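/- In the heat kernel setup, fix σ < 2 and two integers a, a' ≥ 1. Then there is a constant C such that for every f ∈ L^∞(μ): sup_{0<t≤1} t^{−σ/2} ‖Q_t^{(a')} f‖_∞ ≤ C·( ‖e^{−L}f‖_∞ + sup_{0<t≤1} t^{−σ/2} ‖Q_t^{(a)} f‖_∞ ). Consequently the Hölder norms ‖f‖_{C^σ,(a)} := ‖e^{−L}f‖_∞ + sup_{0<t≤1} t^{−σ/2}‖Q_t^{(a)}f‖_∞, for different integer parameters a ≥ 1, are pairwise equivalent; in particular the space C^σ does not depend on the choice of a. -/

import Mathlib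

open MeasureTheory Metric Set
open scoped ENNReal NNReal

noncomputable section

/-- The (pointwise) supremum norm of a real-valued function, valued in `ℝ≥0∞`. -/
def supNorm {M : Type*} (g : M → ℝ) : ℝ≥0∞ := ⨆ x, (‖g x‖₊ : ℝ≥0∞)

/-- `γ_a = ∫_0^∞ s^a e^{-s} ds/s`. -/
def gammaInt (a : ℕ) : ℝ := ∫ s in Set.Ioi (0 : ℝ), s ^ a * Real.exp (-s) / s

/-- A conservative heat kernel on a doubling metric measure space, satisfying the
Gaussian upper estimates (UE) for all time derivatives, for `0 < t ≤ 1`. -/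
structure HeatKernelSetup (M : Type*) [MeasurableSpace M] [MetricSpace M] where
  μ : Measure M
  p : ℝ → M → M → ℝ
  C_D : ℝ
  C_D_pos : 0 < C_D
  doubling : ∀ (x : M) (r : ℝ), 0 < r →
    μ (Metric.ball x (2 * r)) ≤ ENNReal.ofReal C_D * μ (Metric.ball x r)
  p_nonneg : ∀ t : ℝ, 0 < t → ∀ x y, 0 ≤ p t x y
  p_symm : ∀ t : ℝ, 0 < t → ∀ x y, p t x y = p t y x
  p_meas : ∀ t : ℝ, 0 < t → Measurable (Function.uncurry (p t))
  semigroup : ∀ s t : ℝ, 0 < s → 0 < t → ∀ x z,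
    p (s + t) x z = ∫ y, p s x y * p t y z ∂μ
  conservative : ∀ t : ℝ, 0 < t → ∀ x, ∫ y, p t x y ∂μ = 1
  smooth : ∀ (x y : M) (m : ℕ) (t : ℝ), 0 < t →
    DifferentiableAt ℝ (iteratedDeriv m (fun s => p s x y)) t
  diff_under_int : ∀ (f : M → ℝ), Measurable f → supNorm f < ⊤ →
    ∀ (m : ℕ) (x : M) (t : ℝ), 0 < t →
      iteratedDeriv m (fun s => ∫ y, p s x y * f y ∂μ) t
        = ∫ y, iteratedDeriv m (fun s => p s x y) t * f y ∂μ
  UE : ∀ m : ℕ, ∃ C, 0 < C ∧ ∃ c, 0 < c ∧ ∀ t : ℝ, 0 < t → t ≤ 1 → ∀ x y,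
    |t ^ m * iteratedDeriv m (fun s => p s x y) t|
      ≤ C / Real.sqrt ((μ (Metric.ball x (Real.sqrt t))).toReal
            * (μ (Metric.ball y (Real.sqrt t))).toReal)
          * Real.exp (-c * dist x y ^ 2 / t)

namespace HeatKernelSetup

variable {M : Type*} [MeasurableSpace M] [MetricSpace M] (H : HeatKernelSetup M)

/-- The semigroup `e^{-tL}` applied to `f`. -/
def S (t : ℝ) (f : M → ℝ) (x : M) : ℝ := ∫ y, H.p t x y * f y ∂H.μ

/-- `Q_t^{(a)} f = (-1)^a t^a ∂_t^a (e^{-tL} f)`. -/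
def Q (a : ℕ) (t : ℝ) (f : M → ℝ) (x : M) : ℝ :=
  (-1 : ℝ) ^ a * t ^ a * iteratedDeriv a (fun s => H.S s f x) t

/-- `P_t^{(a)} f = ∑_{k<a} c_{a,k} (-1)^k t^k ∂_t^k (e^{-tL} f)`, where the coefficients
`c_{a,k} = 1/k!` are determined by `φ_a(x) = (∑_k c_{a,k} x^k) e^{-x}`. -/
def P (a : ℕ) (t : ℝ) (f : M → ℝ) (x : M) : ℝ :=
  ∑ k ∈ Finset.range a, ((Nat.factorial k : ℝ))⁻¹ * (-1 : ℝ) ^ k * t ^ k *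
    iteratedDeriv k (fun s => H.S s f x) t

/-- `(tL)P_t^{(a)} f = ∑_{k<a} c_{a,k} (-1)^{k+1} t^{k+1} ∂_t^{k+1} (e^{-tL} f)`. -/
def LP (a : ℕ) (t : ℝ) (f : M → ℝ) (x : M) : ℝ :=
  ∑ k ∈ Finset.range a, ((Nat.factorial k : ℝ))⁻¹ * (-1 : ℝ) ^ (k + 1) * t ^ (k + 1) *
    iteratedDeriv (k + 1) (fun s => H.S s f x) t

/-- The Hölder norm `‖f‖_{C^σ,(a)} = ‖e^{-L} f‖_∞ + sup_{0<t≤1} t^{-σ/2} ‖Q_t^{(a)} f‖_∞`. -/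
def CNorm (a : ℕ) (σ : ℝ) (f : M → ℝ) : ℝ≥0∞ :=
  supNorm (H.S 1 f) +
    ⨆ t ∈ Set.Ioc (0 : ℝ) 1, ENNReal.ofReal (t ^ (-σ / 2)) * supNorm (H.Q a t f)

/-- The integrand of the paraproduct `Π_g^{(b)}(f)` at frequency scale `t`:
`(tL)P_t^{(b)}( Q_t^{(b-1)} f · P_t^{(b)} g ) + Q_t^{(b-1)}( (tL)P_t^{(b)} f · P_t^{(b)} g )`. -/
def paraInner (b : ℕ) (g f : M → ℝ) (t : ℝ) : M → ℝ := fun y =>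
  H.LP b t (fun z => H.Q (b - 1) t f z * H.P b t g z) y
    + H.Q (b - 1) t (fun z => H.LP b t f z * H.P b t g z) y

/-- `Q_s^{(a)} Π_g^{(b)}(f)`, defined by applying `Q_s^{(a)}` under the time integral. -/
def paraQ (b a : ℕ) (g f : M → ℝ) (s : ℝ) : M → ℝ := fun x =>
  (gammaInt b)⁻¹ * ∫ t in Set.Ioc (0 : ℝ) 1, H.Q a s (H.paraInner b g f t) x / t

/-- `e^{-L} Π_g^{(b)}(f)`, defined by applying `e^{-L}` under the time integral. -/
def paraS (b : ℕ) (g f : M → ℝ) : M → ℝ := fun x =>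
  (gammaInt b)⁻¹ * ∫ t in Set.Ioc (0 : ℝ) 1, H.S 1 (H.paraInner b g f t) x / t

/-- The paraproduct `Π_g^{(b)}(f)` as a function, when the integral converges. -/
def paraFn (b : ℕ) (g f : M → ℝ) : M → ℝ := fun x =>
  (gammaInt b)⁻¹ * ∫ t in Set.Ioc (0 : ℝ) 1, H.paraInner b g f t x / t

/-- The resolution operator `R(v)_t = ∫_0^t P_{t-s}^{(b)} v(s) ds`. -/
def resolve (b : ℕ) (v : ℝ → M → ℝ) (t : ℝ) : M → ℝ := fun x =>
  ∫ s in Set.Ioc (0 : ℝ) t, H.P b (t - s) (v s) x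

end HeatKernelSetup

namespace HeatKernelSetup

open Filter Topology

variable {M : Type*} [MeasurableSpace M] [MetricSpace M] (H : HeatKernelSetup M)

lemma bound_of_supNorm {f : M → ℝ} (hf : supNorm f < ⊤) : ∃ B, 0 ≤ B ∧ ∀ x, |f x| ≤ B := by
  refine ⟨(supNorm f).toReal, ENNReal.toReal_nonneg, fun x => ?_⟩
  have h : (‖f x‖₊ : ℝ≥0∞) ≤ supNorm f := le_iSup (fun x => (‖f x‖₊ : ℝ≥0∞)) x
  have := ENNReal.toReal_mono hf.ne h
  simpa using this

lemma supNorm_le_of_bound {f : M → ℝ} {B : ℝ} (h : ∀ x, |f x| ≤ B) :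
    supNorm f ≤ ENNReal.ofReal B := by
  refine iSup_le fun x => ?_
  rw [← ENNReal.ofReal_coe_nnreal]
  exact ENNReal.ofReal_le_ofReal (by simpa using h x)

lemma supNorm_lt_top_of_bound {f : M → ℝ} {B : ℝ} (h : ∀ x, |f x| ≤ B) : supNorm f < ⊤ :=
  (supNorm_le_of_bound h).trans_lt ENNReal.ofReal_lt_top

/-- volume -/
def V (x : M) (r : ℝ) : ℝ := (H.μ (ball x r)).toReal

def D : ℝ := max H.C_D 1

lemma one_le_D : 1 ≤ H.D := le_max_right _ _

lemma V_ne_zero (x : M) {r : ℝ} (hr : 0 < r) (hr1 : r ≤ 1) : H.V x r ≠ 0 := by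
  intro h0
  obtain ⟨C, hC, c, hc, hUE⟩ := H.UE 0
  have hsq : Real.sqrt (r ^ 2) = r := Real.sqrt_sq hr.le
  have h1 : ∀ y, H.p (r ^ 2) x y = 0 := by
    intro y
    have := hUE (r ^ 2) (by positivity) (by nlinarith) x y
    rw [hsq] at this
    simp only [V] at h0
    simp only [h0, zero_mul, Real.sqrt_zero, div_zero, pow_zero, one_mul, iteratedDeriv_zero] at this
    exact abs_nonpos_iff.1 this
  have := H.conservative (r ^ 2) (by positivity) x
  simp [h1] at this

lemma double_pow (x : M) {r : ℝ} (hr : 0 < r) (k : ℕ) :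
    H.μ (ball x (2 ^ k * r)) ≤ ENNReal.ofReal (H.D ^ k) * H.μ (ball x r) := by
  induction k with
  | zero => simp
  | succ k ih =>
    have h1 := H.doubling x (2 ^ k * r) (by positivity)
    have h2 : ENNReal.ofReal H.C_D ≤ ENNReal.ofReal H.D :=
      ENNReal.ofReal_le_ofReal (le_max_left _ _)
    have hD := H.one_le_D
    calc H.μ (ball x (2 ^ (k + 1) * r)) = H.μ (ball x (2 * (2 ^ k * r))) := by ring_nf
      _ ≤ _ := h1
      _ ≤ ENNReal.ofReal H.D * (ENNReal.ofReal (H.D ^ k) * H.μ (ball x r)) := by gcongr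
      _ = _ := by
        rw [← mul_assoc, ← ENNReal.ofReal_mul (by linarith), pow_succ, mul_comm H.D]

lemma ball_lt_top1 (x : M) {r : ℝ} (hr : 0 < r) (hr1 : r ≤ 1) : H.μ (ball x r) < ⊤ := by
  have := H.V_ne_zero x hr hr1
  by_contra h
  apply this
  simp only [not_lt, top_le_iff] at h
  simp [V, h]

lemma ball_pow_lt_top (x : M) {r : ℝ} (hr : 0 < r) (hr1 : r ≤ 1) (k : ℕ) :
    H.μ (ball x (2 ^ k * r)) < ⊤ :=
  (H.double_pow x hr k).trans_lt (ENNReal.mul_lt_top ENNReal.ofReal_lt_top (H.ball_lt_top1 x hr hr1))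

lemma V_pow_le (x : M) {r : ℝ} (hr : 0 < r) (hr1 : r ≤ 1) (k : ℕ) :
    H.V x (2 ^ k * r) ≤ H.D ^ k * H.V x r := by
  have hD := H.one_le_D
  have := ENNReal.toReal_mono
    (ENNReal.mul_lt_top ENNReal.ofReal_lt_top (H.ball_lt_top1 x hr hr1)).ne (H.double_pow x hr k)
  rwa [ENNReal.toReal_mul, ENNReal.toReal_ofReal (by positivity)] at this

lemma V_pos (x : M) {r : ℝ} (hr : 0 < r) (hr1 : r ≤ 1) : 0 < H.V x r :=
  lt_of_le_of_ne ENNReal.toReal_nonneg (H.V_ne_zero x hr hr1).symm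

lemma V_comp {x y : M} {r : ℝ} (hr : 0 < r) (hr1 : r ≤ 1) (k : ℕ) (h : dist x y < 2 ^ k * r) :
    H.V x r ≤ H.D ^ (k + 1) * H.V y r := by
  refine le_trans ?_ (H.V_pow_le y hr hr1 (k + 1))
  refine ENNReal.toReal_mono (H.ball_pow_lt_top y hr hr1 (k + 1)).ne (measure_mono ?_)
  apply ball_subset_ball'
  have : r ≤ 2 ^ k * r := by
    have : (1 : ℝ) ≤ 2 ^ k := one_le_pow₀ (by norm_num)
    nlinarith
  rw [pow_succ]
  linarith

lemma sigmaFinite (x : M) : SigmaFinite H.μ := by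
  refine ⟨⟨⟨fun k => ball x (2 ^ k * 1), fun _ => mem_univ _,
    fun k => H.ball_pow_lt_top x one_pos le_rfl k, ?_⟩⟩⟩
  refine eq_univ_of_forall fun y => mem_iUnion.2 ?_
  obtain ⟨k, hk⟩ := pow_unbounded_of_one_lt (dist y x) (one_lt_two : (1 : ℝ) < 2)
  exact ⟨k, by simpa using hk⟩

lemma summable_aux (D c : ℝ) (hD : 1 ≤ D) (hc : 0 < c) :
    Summable (fun k : ℕ => D ^ (2 * k + 1) * Real.exp (-c * 4 ^ k)) := by
  refine summable_of_ratio_test_tendsto_lt_one (l := 0) zero_lt_one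
    (Eventually.of_forall fun k => by positivity) ?_
  have h1 : ∀ k : ℕ, ‖D ^ (2 * (k + 1) + 1) * Real.exp (-c * 4 ^ (k + 1))‖ /
      ‖D ^ (2 * k + 1) * Real.exp (-c * 4 ^ k)‖ = D ^ 2 * Real.exp (-(3 * c * 4 ^ k)) := by
    intro k
    rw [Real.norm_of_nonneg (by positivity), Real.norm_of_nonneg (by positivity)]
    rw [div_eq_iff (by positivity)]
    have : Real.exp (-c * 4 ^ (k + 1)) = Real.exp (-(3 * c * 4 ^ k)) * Real.exp (-c * 4 ^ k) := by
      rw [← Real.exp_add]; ring_nf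
    rw [this]; ring
  simp_rw [h1]
  rw [← mul_zero (D ^ 2)]
  apply Tendsto.const_mul
  apply Real.tendsto_exp_neg_atTop_nhds_zero.comp
  exact (tendsto_pow_atTop_atTop_of_one_lt (by norm_num : (1 : ℝ) < 4)).const_mul_atTop (by positivity)

lemma dom (m : ℕ) : ∃ K, 0 < K ∧ ∀ r : ℝ, 0 < r → r ≤ 1 → ∀ x, ∃ G : M → ℝ, Integrable G H.μ ∧
    ∫ y, G y ∂H.μ ≤ K * (r ^ m)⁻¹ ∧
    ∀ s, r ≤ s → s ≤ 4 * r → s ≤ 1 → ∀ y,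
      |iteratedDeriv m (fun s => H.p s x y) s| ≤ G y := by
  obtain ⟨C, hC, c, hc, hUE⟩ := H.UE m
  set D := H.D with hDdef
  have hD : 1 ≤ D := H.one_le_D
  have hD0 : 0 < D := by linarith
  set c' := c / 16 with hc'
  have hc'0 : 0 < c' := by positivity
  have hS := summable_aux D c' hD hc'0
  have hSpos : 0 < ∑' k : ℕ, D ^ (2 * k + 1) * Real.exp (-c' * 4 ^ k) :=
    hS.tsum_pos (fun k => by positivity) 0 (by positivity)
  refine ⟨C * Real.exp c' * ∑' k : ℕ, D ^ (2 * k + 1) * Real.exp (-c' * 4 ^ k),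
    by positivity, ?_⟩
  intro r hr hr1 x
  set ρ := Real.sqrt r with hρdef
  have hρ : 0 < ρ := Real.sqrt_pos.2 hr
  have hρ1 : ρ ≤ 1 := Real.sqrt_le_one.2 hr1
  have hρ2 : ρ ^ 2 = r := Real.sq_sqrt hr.le
  have hV := H.V_pos x hρ hρ1
  set v := H.V x ρ with hvdef
  let w : ℕ → ℝ := fun k =>
    (r ^ m)⁻¹ * C * (D ^ (k + 1) / v) * (Real.exp c' * Real.exp (-c' * 4 ^ k))
  have hw : ∀ k, 0 < w k := fun k => by positivity
  let T : ℕ → Set M := fun k => toMeasurable H.μ (ball x (2 ^ k * ρ))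
  have hTm : ∀ k, MeasurableSet (T k) := fun k => measurableSet_toMeasurable _ _
  have hTμ : ∀ k, H.μ (T k) = H.μ (ball x (2 ^ k * ρ)) := fun k => measure_toMeasurable _
  let F : ℕ → M → ℝ := fun k => (T k).indicator (fun _ => w k)
  have hFi : ∀ k, Integrable (F k) H.μ := fun k =>
    (integrable_indicator_iff (hTm k)).2 (integrableOn_const
      (by rw [hTμ]; exact (H.ball_pow_lt_top x hρ hρ1 k).ne))
  have hF0 : ∀ k y, 0 ≤ F k y := fun k y => indicator_nonneg (fun _ _ => (hw k).le) y
  have hFint : ∀ k, ∫ y, F k y ∂H.μ = H.V x (2 ^ k * ρ) * w k := by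
    intro k
    rw [integral_indicator (hTm k), setIntegral_const, smul_eq_mul, Measure.real, hTμ]
    rfl
  have hFle : ∀ k, ∫ y, F k y ∂H.μ ≤ (r ^ m)⁻¹ * (C * Real.exp c') *
      (D ^ (2 * k + 1) * Real.exp (-c' * 4 ^ k)) := by
    intro k
    rw [hFint]
    calc H.V x (2 ^ k * ρ) * w k ≤ (D ^ k * v) * w k := by
          have := hw k
          gcongr
          exact H.V_pow_le x hρ hρ1 k
      _ = _ := by
          simp only [w]
          field_simp
          ring
  have hSS := hS.mul_left ((r ^ m)⁻¹ * (C * Real.exp c'))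
  have hFsum : Summable (fun k => ∫ y, F k y ∂H.μ) :=
    Summable.of_nonneg_of_le (fun k => integral_nonneg (hF0 k)) hFle hSS
  have hFn : ∀ k, ∫ y, ‖F k y‖ ∂H.μ = ∫ y, F k y ∂H.μ := fun k => by
    congr 1; ext y; exact Real.norm_of_nonneg (hF0 k y)
  have hsum := hasSum_integral_of_summable_integral_norm hFi (by simpa only [hFn] using hFsum)
  have hpos : 0 < ∫ y, (∑' k, F k y) ∂H.μ := by
    rw [← hsum.tsum_eq]
    refine hFsum.tsum_pos (fun k => integral_nonneg (hF0 k)) 0 ?_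
    rw [hFint]
    have := hw 0
    simp only [pow_zero, one_mul]
    positivity
  have hwsum : Summable w := by
    refine Summable.of_nonneg_of_le (fun k => (hw k).le) (fun k => ?_)
      (hS.mul_left ((r ^ m)⁻¹ * (C * Real.exp c') / v))
    have : D ^ (k + 1) ≤ D ^ (2 * k + 1) := pow_le_pow_right₀ hD (by omega)
    calc w k = (r ^ m)⁻¹ * (C * Real.exp c') / v * (D ^ (k + 1) * Real.exp (-c' * 4 ^ k)) := by
          simp only [w]; ring
      _ ≤ _ := by gcongr
  refine ⟨fun y => ∑' k, F k y, ?_, ?_, ?_⟩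
  · by_contra h
    rw [integral_undef h] at hpos
    exact lt_irrefl _ hpos
  · rw [← hsum.tsum_eq]
    refine (hFsum.tsum_le_tsum hFle hSS).trans (le_of_eq ?_)
    rw [tsum_mul_left]; ring
  · intro s hrs hs4 hs1 y
    have hs : 0 < s := hr.trans_le hrs
    have hex : ∃ k : ℕ, dist x y < 2 ^ k * ρ := by
      obtain ⟨k, hk⟩ := pow_unbounded_of_one_lt (dist x y / ρ) (one_lt_two : (1 : ℝ) < 2)
      exact ⟨k, (div_lt_iff₀ hρ).1 hk⟩
    classical
    let k := Nat.find hex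
    have hk : dist x y < 2 ^ k * ρ := Nat.find_spec hex
    have hFy : Summable (fun k => F k y) :=
      Summable.of_nonneg_of_le (fun k => hF0 k y)
        (fun k => indicator_le_self' (fun _ _ => (hw k).le) y) hwsum
    refine le_trans ?_ (hFy.le_tsum k (fun j _ => hF0 j y))
    have hFk : F k y = w k := indicator_of_mem
      (subset_toMeasurable _ _ (by rw [mem_ball, dist_comm]; exact hk)) _
    rw [hFk]
    have hue := hUE s hs hs1 x y
    rw [abs_mul, abs_of_pos (pow_pos hs m)] at hue
    have hue2 : |iteratedDeriv m (fun s => H.p s x y) s| ≤ (s ^ m)⁻¹ * (C / Real.sqrt (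
        H.V x (Real.sqrt s) * H.V y (Real.sqrt s)) * Real.exp (-c * dist x y ^ 2 / s)) := by
      rw [inv_mul_eq_div, le_div_iff₀ (pow_pos hs m), mul_comm]
      exact hue
    refine hue2.trans ?_
    have hsq1 : Real.sqrt s ≤ 1 := Real.sqrt_le_one.2 hs1
    have hρs : ρ ≤ Real.sqrt s := Real.sqrt_le_sqrt hrs
    have hmono : ∀ z, H.V z ρ ≤ H.V z (Real.sqrt s) := fun z =>
      ENNReal.toReal_mono (H.ball_lt_top1 z (hρ.trans_le hρs) hsq1).ne
        (measure_mono (ball_subset_ball hρs))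
    have hVy : v / D ^ (k + 1) ≤ H.V y (Real.sqrt s) := by
      refine le_trans ?_ (hmono y)
      rw [div_le_iff₀ (by positivity), mul_comm]
      exact H.V_comp hρ hρ1 k hk
    have hsq : v / D ^ (k + 1) ≤ Real.sqrt (H.V x (Real.sqrt s) * H.V y (Real.sqrt s)) := by
      apply Real.le_sqrt_of_sq_le
      rw [sq]
      have h1 : v / D ^ (k + 1) ≤ v := div_le_self hV.le (one_le_pow₀ hD)
      have h2 : 0 ≤ v / D ^ (k + 1) := by positivity
      exact mul_le_mul (h1.trans (hmono x)) hVy h2 (hV.le.trans (hmono x))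
    have hexp : Real.exp (-c * dist x y ^ 2 / s) ≤ Real.exp c' * Real.exp (-c' * 4 ^ k) := by
      rw [← Real.exp_add]
      apply Real.exp_le_exp.2
      rcases Nat.eq_zero_or_pos k with h0 | h0
      · rw [h0]
        have : 0 ≤ c * dist x y ^ 2 / s := by positivity
        have e : -c * dist x y ^ 2 / s = - (c * dist x y ^ 2 / s) := by ring
        rw [e]
        simp only [pow_zero]
        linarith
      · obtain ⟨j, hj⟩ : ∃ j, k = j + 1 := ⟨k - 1, by omega⟩
        have hjd : 2 ^ j * ρ ≤ dist x y := by
          have := Nat.find_min hex (m := j) (show j < k by omega)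
          exact not_lt.1 this
        have h4 : (4 : ℝ) ^ j * r ≤ dist x y ^ 2 := by
          have : (2 ^ j * ρ) ^ 2 ≤ dist x y ^ 2 := by gcongr
          rw [mul_pow, hρ2, ← pow_mul, mul_comm j 2, pow_mul] at this
          norm_num at this
          exact this
        have h5 : c' * 4 ^ k ≤ c * dist x y ^ 2 / s := by
          rw [le_div_iff₀ hs, hj, hc', pow_succ]
          have : (4 : ℝ) ^ j * s ≤ 4 * dist x y ^ 2 := by
            have : (4 : ℝ) ^ j * s ≤ 4 ^ j * (4 * r) := by gcongr
            linarith
          nlinarith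
        have e : -c * dist x y ^ 2 / s = - (c * dist x y ^ 2 / s) := by ring
        rw [e]
        linarith
    calc (s ^ m)⁻¹ * (C / Real.sqrt (
        H.V x (Real.sqrt s) * H.V y (Real.sqrt s)) * Real.exp (-c * dist x y ^ 2 / s))
        ≤ (r ^ m)⁻¹ * (C / (v / D ^ (k + 1)) * (Real.exp c' * Real.exp (-c' * 4 ^ k))) := by
          gcongr
      _ = w k := by simp only [w]; field_simp

lemma meas_iter {α : Type*} [MeasurableSpace α] (g : ℝ → α → ℝ)
    (hg : ∀ t, 0 < t → Measurable (g t))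
    (hd : ∀ y m t, 0 < t → DifferentiableAt ℝ (iteratedDeriv m (fun s => g s y)) t) (m : ℕ) :
    ∀ t, 0 < t → Measurable (fun y => iteratedDeriv m (fun s => g s y) t) := by
  induction m with
  | zero => intro t ht; simpa using hg t ht
  | succ m ih =>
    intro t ht
    let u : ℕ → ℝ := fun n => 1 / ((n : ℝ) + 1)
    have hu0 : ∀ n, 0 < u n := fun n => by positivity
    have hu : Tendsto u atTop (𝓝[≠] 0) :=
      tendsto_nhdsWithin_of_tendsto_nhds_of_eventually_within _
        tendsto_one_div_add_atTop_nhds_zero_nat (Eventually.of_forall fun n => (hu0 n).ne')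
    refine measurable_of_tendsto_metrizable (f := fun n y => (u n)⁻¹ *
      (iteratedDeriv m (fun s => g s y) (t + u n) - iteratedDeriv m (fun s => g s y) t)) ?_ ?_
    · intro n
      exact ((ih _ (add_pos ht (hu0 n))).sub (ih _ ht)).const_mul _
    · rw [tendsto_pi_nhds]
      intro y
      rw [iteratedDeriv_succ]
      have := (hd y m t ht).hasDerivAt.tendsto_slope_zero.comp hu
      simpa [Function.comp_def] using this

lemma p_meas_right {t : ℝ} (ht : 0 < t) (x : M) : Measurable (H.p t x) :=
  (H.p_meas t ht).comp measurable_prodMk_left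

lemma dp_meas (m : ℕ) {t : ℝ} (ht : 0 < t) (x : M) :
    Measurable (fun y => iteratedDeriv m (fun s => H.p s x y) t) :=
  meas_iter (fun s y => H.p s x y) (fun _ ht => H.p_meas_right ht x)
    (fun y m t ht => H.smooth x y m t ht) m t ht

lemma p_integrable {t : ℝ} (ht : 0 < t) (x : M) : Integrable (H.p t x) H.μ := by
  by_contra h
  have := H.conservative t ht x
  rw [integral_undef h] at this
  exact zero_ne_one this

lemma dp_integrable (m : ℕ) {t : ℝ} (ht : 0 < t) (ht1 : t ≤ 1) (x : M) :
    Integrable (fun y => iteratedDeriv m (fun s => H.p s x y) t) H.μ := by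
  obtain ⟨K, hK, h⟩ := H.dom m
  obtain ⟨G, hG, -, hb⟩ := h t ht ht1 x
  refine hG.mono' (H.dp_meas m ht x).aestronglyMeasurable (Eventually.of_forall fun y => ?_)
  exact hb t le_rfl (by linarith) ht1 y

lemma mul_bdd_integrable {q g : M → ℝ} (hq : Integrable q H.μ) (hg : Measurable g) {B : ℝ}
    (hB : ∀ x, |g x| ≤ B) : Integrable (fun y => q y * g y) H.μ :=
  hq.mul_bdd hg.aestronglyMeasurable (Eventually.of_forall hB)

lemma integral_mul_bdd {q g : M → ℝ} (hq : Integrable q H.μ) (hg : Measurable g) {B : ℝ}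
    (hB : ∀ x, |g x| ≤ B) : |∫ y, q y * g y ∂H.μ| ≤ (∫ y, |q y| ∂H.μ) * B := by
  rw [← integral_mul_const]
  refine (norm_integral_le_integral_norm (fun y => q y * g y)).trans ?_
  refine integral_mono_of_nonneg (Eventually.of_forall fun _ => norm_nonneg _)
    (hq.abs.mul_const B) (Eventually.of_forall fun y => ?_)
  simp only [norm_mul, Real.norm_eq_abs]
  exact mul_le_mul_of_nonneg_left (hB y) (abs_nonneg _)

lemma S_bdd {t : ℝ} (ht : 0 < t) {g : M → ℝ} (hg : Measurable g) {B : ℝ}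
    (hB : ∀ x, |g x| ≤ B) (x : M) : |H.S t g x| ≤ B := by
  refine (H.integral_mul_bdd (H.p_integrable ht x) hg hB).trans (le_of_eq ?_)
  have : ∀ y, |H.p t x y| = H.p t x y := fun y => abs_of_nonneg (H.p_nonneg t ht x y)
  simp only [this, H.conservative t ht x, one_mul]

lemma S_meas {t : ℝ} (ht : 0 < t) {g : M → ℝ} (hg : Measurable g) : Measurable (H.S t g) := by
  rcases isEmpty_or_nonempty M with h | ⟨⟨x⟩⟩
  · exact measurable_of_empty _
  have := H.sigmaFinite x
  refine (StronglyMeasurable.integral_prod_right (f := fun x y => H.p t x y * g y) ?_).measurable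
  exact ((H.p_meas t ht).mul (hg.comp measurable_snd)).stronglyMeasurable

lemma S_add {s t : ℝ} (hs : 0 < s) (ht : 0 < t) {g : M → ℝ} (hg : Measurable g) {B : ℝ}
    (hB : ∀ x, |g x| ≤ B) (x : M) : H.S (s + t) g x = H.S s (H.S t g) x := by
  have := H.sigmaFinite x
  have hmeas : Measurable (Function.uncurry fun y z => H.p s x y * (H.p t y z * g z)) :=
    ((H.p_meas_right hs x).comp measurable_fst).mul
      ((H.p_meas t ht).mul (hg.comp measurable_snd))
  have hint : Integrable (Function.uncurry fun y z => H.p s x y * (H.p t y z * g z))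
      (H.μ.prod H.μ) := by
    rw [integrable_prod_iff hmeas.aestronglyMeasurable]
    constructor
    · exact Eventually.of_forall fun y =>
        (H.mul_bdd_integrable (H.p_integrable ht y) hg hB).const_mul (H.p s x y)
    · refine ((H.p_integrable hs x).mul_const B).mono'
        hmeas.norm.stronglyMeasurable.integral_prod_right'.aestronglyMeasurable
        (Eventually.of_forall fun y => ?_)
      have h1 : (fun z => ‖H.p s x y * (H.p t y z * g z)‖) =
          fun z => H.p s x y * (H.p t y z * |g z|) := by
        ext z
        rw [norm_mul, norm_mul, Real.norm_of_nonneg (H.p_nonneg s hs x y),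
          Real.norm_of_nonneg (H.p_nonneg t ht y z), Real.norm_eq_abs]
      simp only [Function.uncurry]
      rw [h1, integral_const_mul, norm_mul, Real.norm_of_nonneg (H.p_nonneg s hs x y)]
      refine mul_le_mul_of_nonneg_left ?_ (H.p_nonneg s hs x y)
      exact H.S_bdd ht (g := fun z => |g z|) hg.abs (fun z => by rw [abs_abs]; exact hB z) y
  have hsw := integral_integral_swap hint
  have e1 : H.S s (H.S t g) x = ∫ y, ∫ z, H.p s x y * (H.p t y z * g z) ∂H.μ ∂H.μ := by
    simp only [S, integral_const_mul]
  rw [e1, hsw]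
  simp only [S]
  congr 1
  ext z
  rw [H.semigroup s t hs ht x z, ← integral_mul_const]
  congr 1
  ext y
  ring

/-- time derivatives of the semigroup -/
def u (m : ℕ) (f : M → ℝ) (t : ℝ) (x : M) : ℝ := iteratedDeriv m (fun s => H.S s f x) t

lemma u_eq (m : ℕ) {g : M → ℝ} (hg : Measurable g) {B : ℝ} (hB : ∀ x, |g x| ≤ B)
    {t : ℝ} (ht : 0 < t) (x : M) :
    H.u m g t x = ∫ y, iteratedDeriv m (fun s => H.p s x y) t * g y ∂H.μ :=
  H.diff_under_int g hg (supNorm_lt_top_of_bound hB) m x t ht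

lemma u_diff_lt_one (m : ℕ) {g : M → ℝ} (hg : Measurable g) {B : ℝ} (hB : ∀ x, |g x| ≤ B)
    {t : ℝ} (ht : 0 < t) (ht1 : t < 1) (x : M) :
    DifferentiableAt ℝ (fun s => H.u m g s x) t := by
  obtain ⟨K, hK, h⟩ := H.dom (m + 1)
  obtain ⟨G, hG, -, hb⟩ := h (t / 2) (by linarith) (by linarith) x
  have hs : Ioo (t / 2) (min 1 (2 * t)) ∈ 𝓝 t :=
    Ioo_mem_nhds (by linarith) (lt_min ht1 (by linarith))
  have key := hasDerivAt_integral_of_dominated_loc_of_deriv_le (μ := H.μ) (𝕜 := ℝ) (x₀ := t)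
    (F := fun s y => iteratedDeriv m (fun s => H.p s x y) s * g y)
    (F' := fun s y => iteratedDeriv (m + 1) (fun s => H.p s x y) s * g y)
    (bound := fun y => G y * B) hs ?_ ?_ ?_ ?_ ?_ ?_
  · refine (key.2.differentiableAt).congr_of_eventuallyEq ?_
    filter_upwards [lt_mem_nhds ht] with s hs0
    exact H.u_eq m hg hB hs0 x
  · filter_upwards [lt_mem_nhds ht] with s hs0
    exact ((H.dp_meas m hs0 x).mul hg).aestronglyMeasurable
  · exact H.mul_bdd_integrable (H.dp_integrable m ht ht1.le x) hg hB
  · exact ((H.dp_meas (m + 1) ht x).mul hg).aestronglyMeasurable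
  · refine Eventually.of_forall fun y s hs => ?_
    rw [norm_mul]
    have h1 := hb s hs.1.le (by have := hs.2.trans_le (min_le_right _ _); linarith)
      (hs.2.trans_le (min_le_left _ _)).le y
    exact mul_le_mul h1 (hB y) (norm_nonneg _) ((abs_nonneg _).trans h1)
  · exact hG.mul_const B
  · refine Eventually.of_forall fun y s hs => ?_
    have hs0 : 0 < s := lt_trans (by linarith) hs.1
    refine HasDerivAt.mul_const ?_ (g y)
    rw [iteratedDeriv_succ]
    exact (H.smooth x y m s hs0).hasDerivAt

lemma u_add_zero (m : ℕ) {g : M → ℝ} (hg : Measurable g) {B : ℝ} (hB : ∀ x, |g x| ≤ B)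
    {s t : ℝ} (hs : 0 < s) (ht : 0 < t) (x : M) :
    H.u m g (s + t) x = H.u m (H.S t g) s x := by
  have h1 : (fun r => H.S (r + t) g x) =ᶠ[𝓝 s] fun r => H.S r (H.S t g) x := by
    filter_upwards [lt_mem_nhds hs] with r hr
    exact H.S_add hr ht hg hB x
  have h2 := h1.iteratedDeriv_eq m
  have h3 := congrFun (iteratedDeriv_comp_add_const m (fun r => H.S r g x) t) s
  simp only [u]
  rw [← h2, ← h3]

lemma u_diff (m : ℕ) {g : M → ℝ} (hg : Measurable g) {B : ℝ} (hB : ∀ x, |g x| ≤ B)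
    {t : ℝ} (ht : 0 < t) (x : M) :
    DifferentiableAt ℝ (fun s => H.u m g s x) t := by
  set s0 := min (t / 2) (1 / 2) with hs0
  have h0 : 0 < s0 := lt_min (by linarith) (by norm_num)
  have h1 : s0 < 1 := (min_le_right _ _).trans_lt (by norm_num)
  have h2 : 0 < t - s0 := by have : s0 ≤ t / 2 := min_le_left _ _; linarith
  have hd := H.u_diff_lt_one m (H.S_meas h2 hg) (H.S_bdd h2 hg hB) h0 h1 x
  have hd2 : DifferentiableAt ℝ (fun r => H.u m (H.S (t - s0) g) (r - (t - s0)) x) t := by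
    have : DifferentiableAt ℝ (fun s => H.u m (H.S (t - s0) g) s x) (t - (t - s0)) := by
      convert hd using 1; ring
    exact DifferentiableAt.comp t this (by fun_prop)
  refine hd2.congr_of_eventuallyEq ?_
  filter_upwards [lt_mem_nhds (show t - s0 < t by linarith)] with r hr
  rw [← H.u_add_zero m hg hB (by linarith) h2 x]
  congr 1; ring

lemma u_hasDeriv (m : ℕ) {g : M → ℝ} (hg : Measurable g) {B : ℝ} (hB : ∀ x, |g x| ≤ B)
    {t : ℝ} (ht : 0 < t) (x : M) :
    HasDerivAt (fun s => H.u m g s x) (H.u (m + 1) g t x) t := by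
  have := (H.u_diff m hg hB ht x).hasDerivAt
  have e : H.u (m + 1) g t x = deriv (fun s => H.u m g s x) t := by
    change iteratedDeriv (m + 1) (fun s => H.S s g x) t = _
    rw [iteratedDeriv_succ]
    rfl
  rw [e]
  exact this

lemma u_meas (m : ℕ) {g : M → ℝ} (hg : Measurable g) {B : ℝ} (hB : ∀ x, |g x| ≤ B)
    {t : ℝ} (ht : 0 < t) : Measurable (H.u m g t) :=
  meas_iter (fun s y => H.S s g y) (fun _ ht => H.S_meas ht hg)
    (fun y m _ ht => H.u_diff m hg hB ht y) m t ht

lemma u_bdd (m : ℕ) : ∃ K, 0 < K ∧ ∀ {g : M → ℝ}, Measurable g → ∀ {B : ℝ}, (∀ x, |g x| ≤ B) →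
    ∀ {t : ℝ}, 0 < t → t ≤ 1 → ∀ x, |H.u m g t x| ≤ K * (t ^ m)⁻¹ * B := by
  obtain ⟨K, hK, h⟩ := H.dom m
  refine ⟨K, hK, fun {g} hg {B} hB {t} ht ht1 x => ?_⟩
  obtain ⟨G, hG, hGi, hb⟩ := h t ht ht1 x
  have hB0 : 0 ≤ B := (abs_nonneg _).trans (hB x)
  rw [H.u_eq m hg hB ht x]
  refine (H.integral_mul_bdd (H.dp_integrable m ht ht1 x) hg hB).trans ?_
  refine mul_le_mul_of_nonneg_right (le_trans ?_ hGi) hB0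
  exact integral_mono (H.dp_integrable m ht ht1 x).abs hG
    (fun y => hb t le_rfl (by linarith) ht1 y)

lemma u_S (m : ℕ) {g : M → ℝ} (hg : Measurable g) {B : ℝ} (hB : ∀ x, |g x| ≤ B)
    {s : ℝ} (hs : 0 < s) (x : M) : ∀ {t : ℝ}, 0 < t → t < 1 →
    H.u m g (s + t) x = H.S s (H.u m g t) x := by
  induction m with
  | zero =>
    intro t ht _
    have := H.S_add hs ht hg hB x
    have e : ∀ r, H.u 0 g r = H.S r g := fun r => by ext y; simp [u]
    rw [e, e]; exact this
  | succ m ih =>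
    intro t ht ht1
    obtain ⟨K, hK, hKb⟩ := H.u_bdd (m + 1)
    obtain ⟨K0, hK0, hKb0⟩ := H.u_bdd m
    have hB0 : 0 ≤ B := (abs_nonneg _).trans (hB x)
    have hn : Ioo (t / 2) 1 ∈ 𝓝 t := Ioo_mem_nhds (by linarith) ht1
    have key := hasDerivAt_integral_of_dominated_loc_of_deriv_le (μ := H.μ) (𝕜 := ℝ) (x₀ := t)
      (F := fun r y => H.p s x y * H.u m g r y)
      (F' := fun r y => H.p s x y * H.u (m + 1) g r y)
      (bound := fun y => H.p s x y * (K * ((t / 2) ^ (m + 1))⁻¹ * B)) hn ?_ ?_ ?_ ?_ ?_ ?_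
    · have h1 := (H.u_hasDeriv m hg hB (add_pos hs ht) x).comp_const_add s t
      have h2 : (fun r => H.u m g (s + r) x) =ᶠ[𝓝 t] fun r => ∫ y, H.p s x y * H.u m g r y ∂H.μ := by
        filter_upwards [Ioo_mem_nhds ht ht1] with r hr
        exact ih hr.1 hr.2
      exact (h1.congr_of_eventuallyEq h2.symm).unique key.2
    · filter_upwards [lt_mem_nhds ht] with r hr
      exact ((H.p_meas_right hs x).mul (H.u_meas m hg hB hr)).aestronglyMeasurable
    · exact H.mul_bdd_integrable (H.p_integrable hs x) (H.u_meas m hg hB ht)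
        (hKb0 hg hB ht ht1.le)
    · exact ((H.p_meas_right hs x).mul (H.u_meas (m + 1) hg hB ht)).aestronglyMeasurable
    · refine Eventually.of_forall fun y r hr => ?_
      have hr0 : 0 < r := lt_trans (by linarith) hr.1
      have hr1 : t / 2 ≤ r := hr.1.le
      rw [norm_mul, Real.norm_of_nonneg (H.p_nonneg s hs x y)]
      refine mul_le_mul_of_nonneg_left ((hKb hg hB hr0 hr.2.le y).trans ?_) (H.p_nonneg s hs x y)
      gcongr
    · exact (H.p_integrable hs x).mul_const _
    · refine Eventually.of_forall fun y r hr => ?_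
      exact (H.u_hasDeriv m hg hB (lt_trans (by linarith) hr.1) y).const_mul _

lemma u_u (m j : ℕ) {g : M → ℝ} (hg : Measurable g) {B : ℝ} (hB : ∀ x, |g x| ≤ B)
    {s t : ℝ} (hs : 0 < s) (x : M) (ht : 0 < t) (ht1 : t < 1) :
    H.u (m + j) g (s + t) x = H.u j (H.u m g t) s x := by
  have h1 : (fun r => H.u m g (r + t) x) =ᶠ[𝓝 s] fun r => H.S r (H.u m g t) x := by
    filter_upwards [lt_mem_nhds hs] with r hr
    exact H.u_S m hg hB hr x ht ht1
  have h2 := h1.iteratedDeriv_eq j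
  have h3 := congrFun (iteratedDeriv_comp_add_const j (fun r => H.u m g r x) t) s
  have h4 : iteratedDeriv j (fun r => H.u m g r x) = fun r => H.u (m + j) g r x := by
    have : (fun r => H.u m g r x) = iteratedDeriv m (fun r => H.S r g x) := rfl
    rw [this]
    ext r
    simp only [u]
    rw [iteratedDeriv_eq_iterate, iteratedDeriv_eq_iterate, iteratedDeriv_eq_iterate,
      add_comm m j, Function.iterate_add_apply]
  rw [h4] at h3
  change _ = iteratedDeriv j (fun r => H.S r (H.u m g t) x) s
  rw [← h2]
  exact h3.symm

/-- the hypothesis that the `(a)`-norm is at most `N`, pointwise -/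
def HypN (a : ℕ) (σ N : ℝ) (f : M → ℝ) : Prop :=
  (∀ x, |H.S 1 f x| ≤ N) ∧
    ∀ t : ℝ, 0 < t → t ≤ 1 → ∀ x, |H.u a f t x| ≤ N * t ^ (σ / 2 - a)

lemma up (σ : ℝ) (a j : ℕ) : ∃ C, 0 < C ∧ ∀ f : M → ℝ, Measurable f → supNorm f < ⊤ →
    ∀ N, H.HypN a σ N f → ∀ t : ℝ, 0 < t → t ≤ 1 → ∀ x,
      |H.u (a + j) f t x| ≤ C * N * t ^ (σ / 2 - (a + j : ℕ)) := by
  obtain ⟨K, hK, h⟩ := H.u_bdd j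
  refine ⟨K * (1 / 2 : ℝ) ^ (σ / 2 - (a + j : ℕ)), by positivity, ?_⟩
  intro f hf hfb N hN t ht ht1 x
  obtain ⟨B, hB0, hB⟩ := bound_of_supNorm hfb
  have ht2 : 0 < t / 2 := by linarith
  have e := H.u_u a j hf hB ht2 x ht2 (by linarith)
  rw [add_halves] at e
  rw [e]
  refine (h (H.u_meas a hf hB ht2) (hN.2 (t / 2) ht2 (by linarith)) ht2 (by linarith) x).trans
    (le_of_eq ?_)
  have e2 : (t / 2) ^ (σ / 2 - (a + j : ℕ)) = (t / 2) ^ (σ / 2 - a) * ((t / 2) ^ j)⁻¹ := by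
    rw [← Real.rpow_natCast (t / 2) j, ← Real.rpow_neg ht2.le, ← Real.rpow_add ht2]
    push_cast; ring_nf
  have e3 : (t / 2) ^ (σ / 2 - (a + j : ℕ)) =
      t ^ (σ / 2 - (a + j : ℕ)) * (1 / 2 : ℝ) ^ (σ / 2 - (a + j : ℕ)) := by
    rw [← Real.mul_rpow ht.le (by norm_num)]; congr 1; ring
  have : K * (1 / 2 : ℝ) ^ (σ / 2 - (a + j : ℕ)) * N * t ^ (σ / 2 - (a + j : ℕ)) =
      K * N * (t / 2) ^ (σ / 2 - (a + j : ℕ)) := by rw [e3]; ring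
  rw [this, e2]; ring

lemma down (σ : ℝ) (hσ : σ < 2) (a j : ℕ) : ∀ k, 1 ≤ k → k + j = a →
    ∃ C, 0 < C ∧ ∀ f : M → ℝ, Measurable f → supNorm f < ⊤ →
    ∀ N, H.HypN a σ N f → ∀ t : ℝ, 0 < t → t ≤ 2 → ∀ x,
      |H.u k f t x| ≤ C * N * t ^ (σ / 2 - k) := by
  induction j with
  | zero =>
    intro k _ hka
    obtain rfl : k = a := by omega
    refine ⟨(1 / 4 : ℝ) ^ (σ / 2 - k), by positivity, ?_⟩
    intro f hf hfb N hN t ht ht2 x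
    obtain ⟨B, hB0, hB⟩ := bound_of_supNorm hfb
    have ht4 : 0 < t / 4 := by linarith
    have e := H.u_S k hf hB (s := 3 * t / 4) (by linarith) x ht4 (by linarith)
    rw [show 3 * t / 4 + t / 4 = t by ring] at e
    rw [e]
    refine (H.S_bdd (by linarith) (H.u_meas k hf hB ht4) (hN.2 (t / 4) ht4 (by linarith)) x).trans
      (le_of_eq ?_)
    rw [show t / 4 = t * (1 / 4) by ring, Real.mul_rpow ht.le (by norm_num)]
    ring
  | succ j ih =>
    intro k hk hka
    obtain ⟨C, hC, h⟩ := ih (k + 1) (by omega) (by omega)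
    obtain ⟨K, hK, hKb⟩ := H.u_bdd k
    have hk' : (1 : ℝ) ≤ k := by exact_mod_cast hk
    set e : ℝ := σ / 2 - k with he
    have he0 : e < 0 := by rw [he]; linarith
    refine ⟨K / 2 ^ e + C / (-e), by
      have : 0 < -e := by linarith
      positivity, ?_⟩
    intro f hf hfb N hN t ht ht2 x
    obtain ⟨B, hB0, hB⟩ := bound_of_supNorm hfb
    have hN0 : 0 ≤ N := (abs_nonneg _).trans (hN.1 x)
    have hne : 0 < -e := by linarith
    -- value at time two
    have h2 : |H.u k f 2 x| ≤ K * N := by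
      have e1 := H.u_add_zero k hf hB one_pos one_pos x
      rw [one_add_one_eq_two] at e1
      rw [e1]
      have := hKb (H.S_meas one_pos hf) hN.1 one_pos le_rfl x
      simpa using this
    have hφ : ∀ s : ℝ, 0 < s →
        HasDerivAt (fun s : ℝ => C * N / (-e) * s ^ e) (-(C * N * s ^ (e - 1))) s := by
      intro s hs
      have := (Real.hasDerivAt_rpow_const (p := e) (Or.inl hs.ne')).const_mul (C * N / (-e))
      have e3 : C * N / (-e) * (e * s ^ (e - 1)) = -(C * N * s ^ (e - 1)) := by
        have : e ≠ 0 := he0.ne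
        field_simp
      rwa [e3] at this
    have hb : ∀ s ∈ Icc t 2, |H.u (k + 1) f s x| ≤ C * N * s ^ (e - 1) := by
      intro s hs
      have := h f hf hfb N hN s (ht.trans_le hs.1) hs.2 x
      have e2 : σ / 2 - ((k + 1 : ℕ) : ℝ) = e - 1 := by rw [he]; push_cast; ring
      rwa [e2] at this
    have anti : ∀ ε : ℝ, |ε| = 1 →
        AntitoneOn (fun s : ℝ => C * N / (-e) * s ^ e - ε * H.u k f s x) (Icc t 2) := by
      intro ε hε
      have hd : ∀ s ∈ Icc t 2, HasDerivAt (fun s : ℝ => C * N / (-e) * s ^ e - ε * H.u k f s x)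
          (-(C * N * s ^ (e - 1)) - ε * H.u (k + 1) f s x) s := fun s hs =>
        (hφ s (ht.trans_le hs.1)).sub ((H.u_hasDeriv k hf hB (ht.trans_le hs.1) x).const_mul ε)
      refine antitoneOn_of_deriv_nonpos (convex_Icc t 2)
        (fun s hs => (hd s hs).continuousAt.continuousWithinAt)
        (fun s hs => (hd s (interior_subset hs)).differentiableAt.differentiableWithinAt) ?_
      intro s hs
      have hs' := interior_subset hs
      rw [(hd s hs').deriv]
      have h3 : |ε * H.u (k + 1) f s x| ≤ C * N * s ^ (e - 1) := by
        rw [abs_mul, hε, one_mul]; exact hb s hs'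
      have := (abs_le.1 h3).1
      linarith
    have h2pos : 0 ≤ C * N / (-e) * (2 : ℝ) ^ e := by positivity
    have m1 := anti 1 (by simp) ⟨le_rfl, ht2⟩ ⟨ht2, le_rfl⟩ ht2
    have m2 := anti (-1) (by simp) ⟨le_rfl, ht2⟩ ⟨ht2, le_rfl⟩ ht2
    simp only at m1 m2
    have h4 := abs_le.1 h2
    have h5 : |H.u k f t x| ≤ K * N + C * N / (-e) * t ^ e := by
      rw [abs_le]; constructor <;> linarith
    have h6 : (2 : ℝ) ^ e ≤ t ^ e := Real.rpow_le_rpow_of_nonpos ht ht2 he0.le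
    have h7 : K * N ≤ K / 2 ^ e * N * t ^ e := by
      have : K * N = K / 2 ^ e * N * 2 ^ e := by field_simp
      rw [this]
      gcongr
    calc _ ≤ _ := h5
      _ ≤ K / 2 ^ e * N * t ^ e + C * N / (-e) * t ^ e := by linarith
      _ = _ := by ring

lemma main_bound (σ : ℝ) (hσ : σ < 2) (a a' : ℕ) (ha' : 1 ≤ a') :
    ∃ C, 0 < C ∧ ∀ f : M → ℝ, Measurable f → supNorm f < ⊤ →
    ∀ N, H.HypN a σ N f → ∀ t : ℝ, 0 < t → t ≤ 1 → ∀ x,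
      |H.u a' f t x| ≤ C * N * t ^ (σ / 2 - a') := by
  rcases le_total a a' with h | h
  · obtain ⟨j, rfl⟩ := Nat.exists_eq_add_of_le h
    exact H.up σ a j
  · obtain ⟨C, hC, hb⟩ := H.down σ hσ a (a - a') a' ha' (by omega)
    exact ⟨C, hC, fun f hf hfb N hN t ht ht1 x => hb f hf hfb N hN t ht (by linarith) x⟩

lemma abs_Q (a : ℕ) {t : ℝ} (ht : 0 < t) (f : M → ℝ) (x : M) :
    |H.Q a t f x| = t ^ a * |H.u a f t x| := by
  simp only [Q, u]
  rw [abs_mul, abs_mul, abs_pow, abs_neg, abs_one, one_pow, one_mul, abs_of_pos (pow_pos ht a)]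

lemma rpow_aux (σ : ℝ) (a : ℕ) {t : ℝ} (ht : 0 < t) :
    t ^ (-σ / 2) * (t ^ a * t ^ (σ / 2 - a)) = 1 := by
  rw [← Real.rpow_natCast t a, ← Real.rpow_add ht, ← Real.rpow_add ht]
  have : -σ / 2 + (a + (σ / 2 - a)) = 0 := by ring
  rw [this, Real.rpow_zero]

lemma hypN_of_CNorm (a : ℕ) (σ : ℝ) (f : M → ℝ) (h : H.CNorm a σ f ≠ ⊤) :
    H.HypN a σ (H.CNorm a σ f).toReal f := by
  constructor
  · intro x
    have h1 : (‖H.S 1 f x‖₊ : ℝ≥0∞) ≤ H.CNorm a σ f :=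
      (le_iSup (fun x => (‖H.S 1 f x‖₊ : ℝ≥0∞)) x).trans le_self_add
    simpa using ENNReal.toReal_mono h h1
  · intro t ht ht1 x
    have h0 : (‖H.Q a t f x‖₊ : ℝ≥0∞) ≤ supNorm (H.Q a t f) :=
      le_iSup (fun x => (‖H.Q a t f x‖₊ : ℝ≥0∞)) x
    have h1 : ENNReal.ofReal (t ^ (-σ / 2)) * (‖H.Q a t f x‖₊ : ℝ≥0∞) ≤ H.CNorm a σ f := by
      refine le_trans ?_ le_add_self
      refine le_trans (mul_le_mul_right h0 _) ?_
      exact le_iSup₂ (f := fun (t : ℝ) (_ : t ∈ Set.Ioc (0 : ℝ) 1) =>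
        ENNReal.ofReal (t ^ (-σ / 2)) * supNorm (H.Q a t f)) t ⟨ht, ht1⟩
    have h2 := ENNReal.toReal_mono h h1
    rw [ENNReal.toReal_mul, ENNReal.toReal_ofReal (by positivity)] at h2
    simp only [ENNReal.coe_toReal, coe_nnnorm, Real.norm_eq_abs] at h2
    rw [H.abs_Q a ht] at h2
    have h3 := rpow_aux σ a ht
    have hp : 0 < t ^ (σ / 2 - (a : ℝ)) := by positivity
    calc |H.u a f t x| = (t ^ (-σ / 2) * (t ^ a * t ^ (σ / 2 - (a : ℝ)))) * |H.u a f t x| := by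
          rw [h3, one_mul]
      _ = (t ^ (-σ / 2) * (t ^ a * |H.u a f t x|)) * t ^ (σ / 2 - (a : ℝ)) := by ring
      _ ≤ _ := by gcongr

end HeatKernelSetup

/-- For `σ < 2` and integers `a, a' ≥ 1` the Hölder norms `‖·‖_{C^σ,(a)}` and
`‖·‖_{C^σ,(a')}` are equivalent: the `Q^{(a')}`-part of the norm is controlled by the full
`(a)`-norm, and hence `‖f‖_{C^σ,(a')} ≤ C ‖f‖_{C^σ,(a)}`.  In particular the space `C^σ` does
not depend on the parameter `a`. -/
theorem holder_norms_equivalent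
    {M : Type*} [MeasurableSpace M] [MetricSpace M] (H : HeatKernelSetup M)
    (σ : ℝ) (hσ : σ < 2) (a a' : ℕ) (ha : 1 ≤ a) (ha' : 1 ≤ a') :
    ∃ C, 0 < C ∧ ∀ f : M → ℝ, Measurable f → supNorm f < ⊤ →
      (⨆ t ∈ Set.Ioc (0 : ℝ) 1, ENNReal.ofReal (t ^ (-σ / 2)) * supNorm (H.Q a' t f))
          ≤ ENNReal.ofReal C * H.CNorm a σ f ∧
      H.CNorm a' σ f ≤ ENNReal.ofReal C * H.CNorm a σ f := by
  obtain ⟨C, hC, h⟩ := H.main_bound σ hσ a a' ha'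
  refine ⟨C + 1, by positivity, fun f hf hfb => ?_⟩
  have key : (⨆ t ∈ Set.Ioc (0 : ℝ) 1, ENNReal.ofReal (t ^ (-σ / 2)) * supNorm (H.Q a' t f))
      ≤ ENNReal.ofReal C * H.CNorm a σ f := by
    by_cases hT : H.CNorm a σ f = ⊤
    · rw [hT, ENNReal.mul_top (by simpa using hC)]
      exact le_top
    have hN := H.hypN_of_CNorm a σ f hT
    set N := (H.CNorm a σ f).toReal with hNdef
    have hb := h f hf hfb N hN
    rw [← ENNReal.ofReal_toReal hT, ← hNdef, ← ENNReal.ofReal_mul hC.le]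
    refine iSup₂_le fun t ht => ?_
    have h1 : supNorm (H.Q a' t f) ≤ ENNReal.ofReal (t ^ a' * (C * N * t ^ (σ / 2 - a'))) := by
      apply HeatKernelSetup.supNorm_le_of_bound
      intro x
      rw [H.abs_Q a' ht.1]
      exact mul_le_mul_of_nonneg_left (hb t ht.1 ht.2 x) (pow_pos ht.1 _).le
    refine (mul_le_mul_right h1 _).trans ?_
    rw [← ENNReal.ofReal_mul (Real.rpow_pos_of_pos ht.1 _).le]
    apply ENNReal.ofReal_le_ofReal
    have h3 := HeatKernelSetup.rpow_aux σ a' ht.1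
    apply le_of_eq
    calc _ = (t ^ (-σ / 2) * (t ^ a' * t ^ (σ / 2 - (a' : ℝ)))) * (C * N) := by ring
      _ = C * N := by rw [h3, one_mul]
  have hsplit : ENNReal.ofReal (C + 1) * H.CNorm a σ f =
      ENNReal.ofReal C * H.CNorm a σ f + H.CNorm a σ f := by
    rw [ENNReal.ofReal_add hC.le zero_le_one, ENNReal.ofReal_one, add_mul, one_mul]
  rw [hsplit]
  refine ⟨key.trans le_self_add, ?_⟩
  rw [add_comm (ENNReal.ofReal C * _)]
  exact add_le_add le_self_add key
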